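/- (Hammersley–Chapman–Robbins bound for the sparse signal-in-noise model.) Let x₀ ∈ X_S and let v_1, …, v_p ∈ ℝ^N be test points with x₀ + v_i ∈ X_S for each i. Let V ∈ ℝ^{N×p} be the matrix with columns v_1, …, v_p, and let J ∈ ℝ^{p×p} have entries J_{ij} = exp(v_iᵀ v_j / σ²) − 1; assume J is invertible. Then every measurable unbiased estimator x̂ whose components are square-integrable with respect to P_{x₀} satisfies ε(x₀; x̂) ≥ Tr(V J⁻¹ Vᵀ). -/

import Mathlib

open MeasureTheory ProbabilityTheory Filter
open scoped ENNReal Classical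

/-- The product Gaussian measure `P_x` on `ℝ^N` with mean `x` and variance `σ²` per coordinate. -/
noncomputable def gaussP (N : ℕ) (σ : ℝ) (x : Fin N → ℝ) : Measure (Fin N → ℝ) :=
  MeasureTheory.Measure.pi fun i => gaussianReal (x i) (Real.toNNReal (σ ^ 2))

/-- The support of `x`: indices with nonzero entries. Its cardinality is `‖x‖₀`. -/
noncomputable def supp {N : ℕ} (x : Fin N → ℝ) : Finset (Fin N) :=
  Finset.univ.filter fun i => x i ≠ 0

/-- The sparse parameter set `X_S = {x : ‖x‖₀ ≤ S}`. -/
def sparseSet (N S : ℕ) : Set (Fin N → ℝ) := {x | (supp x).card ≤ S}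

/-- An estimator is unbiased if each component is `P_x`-integrable with mean `x i`
for every `x ∈ X_S`. -/
def Unbiased (N S : ℕ) (σ : ℝ) (est : (Fin N → ℝ) → Fin N → ℝ) : Prop :=
  ∀ x ∈ sparseSet N S, ∀ i,
    Integrable (fun y => est y i) (gaussP N σ x) ∧
    (∫ y, est y i ∂gaussP N σ x) = x i

/-- The MSE `ε(x; x̂) = ∫ ‖x̂(y) − x‖₂² dP_x(y)`, as an extended real. -/
noncomputable def MSE (N : ℕ) (σ : ℝ) (est : (Fin N → ℝ) → Fin N → ℝ)
    (x : Fin N → ℝ) : ℝ≥0∞ :=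
  ∫⁻ y, ENNReal.ofReal (∑ i, (est y i - x i) ^ 2) ∂gaussP N σ x

/-!
The likelihood ratios `L i = dP_{x₀ + v i} / dP_{x₀}` turn unbiasedness into covariances:
for every coordinate `e` of the estimator, `cov[e, L i] = E_{x₀ + v i} e - E_{x₀} e = v i n`.
Since `L v * L w = exp (⟪v, w⟫ / σ²) * L (v + w)`, the covariance matrix of the `L i` is `J`.
The variance of the residual of `e` after regression on the `L i` is nonnegative, which is the
bound for one coordinate; the mean squared error is the sum of the coordinate variances.
-/

section LikelihoodRatio

variable {Ω ι : Type*} {mΩ : MeasurableSpace Ω} [Fintype ι] {μ : Measure Ω} {L X : Ω → ℝ}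

lemma integral_withDensity_ofReal (hL : AEMeasurable L μ) (hL₀ : 0 ≤ᵐ[μ] L) (X : Ω → ℝ) :
    ∫ ω, X ω ∂μ.withDensity (fun ω => .ofReal (L ω)) = ∫ ω, X ω * L ω ∂μ := by
  rw [integral_withDensity_eq_integral_toReal_smul₀ hL.ennreal_ofReal (by simp)]
  refine integral_congr_ae ?_
  filter_upwards [hL₀] with ω hω
  rw [ENNReal.toReal_ofReal hω, smul_eq_mul, mul_comm]

lemma integral_eq_one_of_withDensity_ofReal
    [IsProbabilityMeasure (μ.withDensity fun ω => .ofReal (L ω))]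
    (hL : AEMeasurable L μ) (hL₀ : 0 ≤ᵐ[μ] L) : ∫ ω, L ω ∂μ = 1 := by
  simpa using (integral_withDensity_ofReal hL hL₀ fun _ => 1).symm

lemma covariance_likelihoodRatio [IsProbabilityMeasure μ]
    [IsProbabilityMeasure (μ.withDensity fun ω => .ofReal (L ω))]
    (hX : MemLp X 2 μ) (hL : MemLp L 2 μ) (hL₀ : 0 ≤ᵐ[μ] L) :
    cov[X, L; μ] = ∫ ω, X ω ∂μ.withDensity (fun ω => .ofReal (L ω)) - ∫ ω, X ω ∂μ := by
  rw [covariance_eq_sub hX hL, integral_withDensity_ofReal hL.aemeasurable hL₀,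
    integral_eq_one_of_withDensity_ofReal hL.aemeasurable hL₀, mul_one]
  rfl

lemma sum_mul_covariance_le_variance [IsFiniteMeasure μ] {Y : ι → Ω → ℝ}
    (hX : MemLp X 2 μ) (hY : ∀ i, MemLp (Y i) 2 μ) {c : ι → ℝ}
    (hc : ∀ j, ∑ i, c i * cov[Y i, Y j; μ] = cov[X, Y j; μ]) :
    ∑ i, c i * cov[X, Y i; μ] ≤ Var[X; μ] := by
  have hcY (i : ι) : MemLp (c i • Y i) 2 μ := (hY i).const_smul (c i)
  have hcov : cov[X, ∑ i, c i • Y i; μ] = ∑ i, c i * cov[X, Y i; μ] := by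
    rw [covariance_sum_right hcY hX]
    simp only [covariance_smul_right]
  have hvar : Var[∑ i, c i • Y i; μ] = ∑ i, c i * cov[X, Y i; μ] := by
    rw [variance_sum hcY, Finset.sum_comm]
    simp only [covariance_smul_left, covariance_smul_right, ← hc, Finset.mul_sum]
  have hresidual := variance_nonneg (X - ∑ i, c i • Y i) μ
  rw [variance_sub hX (memLp_finsetSum' _ fun i _ => hcY i), hcov, hvar] at hresidual
  linarith

theorem hammersley_chapman_robbins [IsProbabilityMeasure μ] {L : ι → Ω → ℝ}
    [∀ i, IsProbabilityMeasure (μ.withDensity fun ω => .ofReal (L i ω))]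
    (hX : AEStronglyMeasurable X μ) (hL : ∀ i, MemLp (L i) 2 μ) (hL₀ : ∀ i, 0 ≤ᵐ[μ] L i)
    {b c : ι → ℝ}
    (hb : ∀ i, ∫ ω, X ω ∂μ.withDensity (fun ω => .ofReal (L i ω)) - ∫ ω, X ω ∂μ = b i)
    (hc : ∀ j, ∑ i, c i * cov[L i, L j; μ] = b j) :
    ENNReal.ofReal (∑ i, c i * b i) ≤ eVar[X; μ] := by
  by_cases hX₂ : MemLp X 2 μ
  · have hcov (i : ι) : cov[X, L i; μ] = b i :=
      (covariance_likelihoodRatio hX₂ (hL i) (hL₀ i)).trans (hb i)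
    rw [← ofReal_variance hX₂]
    simp only [← hcov] at hc ⊢
    exact ENNReal.ofReal_le_ofReal (sum_mul_covariance_le_variance hX₂ hL hc)
  · simp [evariance_eq_top hX hX₂]

end LikelihoodRatio

section Gaussian

open scoped NNReal Matrix

variable {ι : Type*} [Fintype ι]

lemma pi_withDensity_ofReal {α : ι → Type*} [∀ i, MeasurableSpace (α i)]
    (μ : ∀ i, Measure (α i)) [∀ i, SigmaFinite (μ i)] {f : ∀ i, α i → ℝ}
    (hf : ∀ i, Integrable (f i) (μ i)) (hf₀ : ∀ i a, 0 ≤ f i a) :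
    Measure.pi (fun i => (μ i).withDensity fun a => .ofReal (f i a)) =
      (Measure.pi μ).withDensity fun a => .ofReal (∏ i, f i (a i)) := by
  have (i : ι) : IsFiniteMeasure ((μ i).withDensity fun a => .ofReal (f i a)) :=
    isFiniteMeasure_withDensity_ofReal (hf i).2
  refine Measure.pi_eq fun s hs => ?_
  have hfs (i : ι) : Integrable (f i) ((μ i).restrict (s i)) := (hf i).restrict
  rw [withDensity_apply _ (.univ_pi hs), Measure.restrict_pi_pi,
    ← ofReal_integral_eq_lintegral_ofReal (.fintype_prod_dep hfs)
      (ae_of_all _ fun a => Finset.prod_nonneg fun i _ => hf₀ i (a i)),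
    integral_fintype_prod_eq_prod,
    ENNReal.ofReal_prod_of_nonneg fun i _ => integral_nonneg (hf₀ i)]
  refine Finset.prod_congr rfl fun i _ => ?_
  rw [ofReal_integral_eq_lintegral_ofReal (hfs i) (ae_of_all _ (hf₀ i)),
    withDensity_apply _ (hs i)]

/-- The likelihood ratio of `N(x + w, v I)` with respect to `N(x, v I)` at the observation `y`. -/
noncomputable def gaussianLR (v : ℝ≥0) (x w y : ι → ℝ) : ℝ :=
  Real.exp ((w ⬝ᵥ (y - x) - w ⬝ᵥ w / 2) / v)

lemma gaussianReal_add_eq_withDensity (m w : ℝ) {v : ℝ≥0} (hv : v ≠ 0) :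
    gaussianReal (m + w) v = (gaussianReal m v).withDensity
      fun y => .ofReal (Real.exp ((w * (y - m) - w * w / 2) / v)) := by
  rw [gaussianReal_of_var_ne_zero _ hv, gaussianReal_of_var_ne_zero _ hv,
    ← withDensity_mul _ (measurable_gaussianPDF _ _) (by fun_prop)]
  congr 1 with y
  rw [Pi.mul_apply, gaussianPDF, gaussianPDF, ← ENNReal.ofReal_mul (gaussianPDFReal_nonneg _ _ _),
    gaussianPDFReal, gaussianPDFReal, mul_assoc (√_)⁻¹, ← Real.exp_add]
  congr 3
  field_simp
  ring

lemma integrable_exp_affine_gaussianReal (m a b : ℝ) (v : ℝ≥0) :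
    Integrable (fun y => Real.exp (a * y + b)) (gaussianReal m v) := by
  simp only [Real.exp_add]
  exact (integrable_exp_mul_gaussianReal a).mul_const _

lemma pi_gaussianReal_add (x w : ι → ℝ) {v : ℝ≥0} (hv : v ≠ 0) :
    Measure.pi (fun i => gaussianReal ((x + w) i) v) =
      (Measure.pi fun i => gaussianReal (x i) v).withDensity
        fun y => .ofReal (gaussianLR v x w y) := by
  have hint (i : ι) : Integrable
      (fun y => Real.exp ((w i * (y - x i) - w i * w i / 2) / v)) (gaussianReal (x i) v) := by
    convert integrable_exp_affine_gaussianReal (x i) (w i / v)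
      ((-(w i * x i) - w i * w i / 2) / v) v using 3
    ring
  simp only [Pi.add_apply, gaussianReal_add_eq_withDensity _ _ hv]
  rw [pi_withDensity_ofReal _ hint fun _ _ => (Real.exp_pos _).le]
  simp only [gaussianLR, ← Real.exp_sum, dotProduct, Pi.sub_apply, ← Finset.sum_div,
    Finset.sum_sub_distrib]

lemma gaussianLR_mul (v : ℝ≥0) (x w w' y : ι → ℝ) :
    gaussianLR v x w y * gaussianLR v x w' y =
      Real.exp (w ⬝ᵥ w' / v) * gaussianLR v x (w + w') y := by
  simp only [gaussianLR, ← Real.exp_add, add_dotProduct, dotProduct_add, dotProduct_comm w' w]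
  ring_nf

lemma gaussianLR_nonneg (v : ℝ≥0) (x w y : ι → ℝ) : 0 ≤ gaussianLR v x w y :=
  (Real.exp_pos _).le

@[fun_prop]
lemma measurable_gaussianLR (v : ℝ≥0) (x w : ι → ℝ) : Measurable (gaussianLR v x w) := by
  unfold gaussianLR dotProduct
  fun_prop

variable (x : ι → ℝ) {v : ℝ≥0} (hv : v ≠ 0)
include hv

lemma isProbabilityMeasure_withDensity_gaussianLR (w : ι → ℝ) :
    IsProbabilityMeasure ((Measure.pi fun i => gaussianReal (x i) v).withDensity
      fun y => .ofReal (gaussianLR v x w y)) := by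
  rw [← pi_gaussianReal_add x w hv]
  infer_instance

lemma integral_gaussianLR (w : ι → ℝ) :
    ∫ y, gaussianLR v x w y ∂Measure.pi (fun i => gaussianReal (x i) v) = 1 :=
  have := isProbabilityMeasure_withDensity_gaussianLR x hv w
  integral_eq_one_of_withDensity_ofReal (by fun_prop) (ae_of_all _ (gaussianLR_nonneg v x w))

lemma integral_gaussianLR_mul (w w' : ι → ℝ) :
    ∫ y, gaussianLR v x w y * gaussianLR v x w' y ∂Measure.pi (fun i => gaussianReal (x i) v) =
      Real.exp (w ⬝ᵥ w' / v) := by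
  simp only [gaussianLR_mul, integral_const_mul, integral_gaussianLR x hv, mul_one]

lemma memLp_two_gaussianLR (w : ι → ℝ) :
    MemLp (gaussianLR v x w) 2 (Measure.pi fun i => gaussianReal (x i) v) := by
  refine (memLp_two_iff_integrable_sq (by fun_prop)).2 (.of_integral_ne_zero ?_)
  simp only [sq, integral_gaussianLR_mul x hv]
  exact (Real.exp_pos _).ne'

lemma covariance_gaussianLR (w w' : ι → ℝ) :
    cov[gaussianLR v x w, gaussianLR v x w'; Measure.pi fun i => gaussianReal (x i) v] =
      Real.exp (w ⬝ᵥ w' / v) - 1 := by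
  rw [covariance_eq_sub (memLp_two_gaussianLR x hv w) (memLp_two_gaussianLR x hv w'),
    integral_gaussianLR x hv, integral_gaussianLR x hv, mul_one]
  simp only [Pi.mul_apply, integral_gaussianLR_mul x hv]

theorem hammersley_chapman_robbins_gaussian {κ : Type*} [Fintype κ] {w : κ → ι → ℝ}
    {X : (ι → ℝ) → ℝ}
    (hX : AEStronglyMeasurable X (Measure.pi fun i => gaussianReal (x i) v)) {b c : κ → ℝ}
    (hb : ∀ k, ∫ y, X y ∂Measure.pi (fun i => gaussianReal ((x + w k) i) v) -
      ∫ y, X y ∂Measure.pi (fun i => gaussianReal (x i) v) = b k)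
    (hc : ∀ l, ∑ k, c k * (Real.exp (w k ⬝ᵥ w l / v) - 1) = b l) :
    ENNReal.ofReal (∑ k, c k * b k) ≤ eVar[X; Measure.pi fun i => gaussianReal (x i) v] := by
  have (k : κ) := isProbabilityMeasure_withDensity_gaussianLR x hv (w k)
  simp only [pi_gaussianReal_add x _ hv] at hb
  simp only [← covariance_gaussianLR x hv] at hc
  exact hammersley_chapman_robbins hX (fun k => memLp_two_gaussianLR x hv (w k))
    (fun k => ae_of_all _ (gaussianLR_nonneg v x (w k))) hb hc

end Gaussian

lemma MSE_eq_sum_evariance {N : ℕ} {σ : ℝ} {est : (Fin N → ℝ) → Fin N → ℝ} {x : Fin N → ℝ}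
    (hest : ∀ n, AEMeasurable (fun y => est y n) (gaussP N σ x))
    (hmean : ∀ n, ∫ y, est y n ∂gaussP N σ x = x n) :
    MSE N σ est x = ∑ n, eVar[fun y => est y n; gaussP N σ x] := by
  simp only [MSE, evariance_eq_lintegral_ofReal, hmean]
  rw [← lintegral_finsetSum' _ fun n _ => (((hest n).sub_const _).pow_const 2).ennreal_ofReal]
  simp only [ENNReal.ofReal_sum_of_nonneg fun _ _ => sq_nonneg _]

lemma ofReal_trace_mul_transpose_le {ι κ : Type*} [Fintype ι] [Fintype κ]
    (A B : Matrix ι κ ℝ) :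
    ENNReal.ofReal (A * B.transpose).trace ≤ ∑ i, ENNReal.ofReal (∑ k, A i k * B i k) :=
  Finset.le_sum_of_subadditive _ ENNReal.ofReal_zero.le (fun _ _ => ENNReal.ofReal_add_le) _ _

/-- When `J` is invertible, `A = V * J⁻¹`; for singular `J` one can take `A = V * J⁺`, with `J⁺`
the Moore–Penrose pseudoinverse. -/
theorem stmt_13_general {N : ℕ} {σ : ℝ} (hσ : σ ≠ 0) {ι : Type*} [Fintype ι]
    (x₀ : Fin N → ℝ) (v : ι → Fin N → ℝ)
    (V : Matrix (Fin N) ι ℝ) (hV : ∀ n i, V n i = v i n)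
    (J : Matrix ι ι ℝ) (hJ : ∀ i j, J i j = Real.exp ((∑ n, v i n * v j n) / σ ^ 2) - 1)
    (A : Matrix (Fin N) ι ℝ) (hA : A * J = V)
    (est : (Fin N → ℝ) → Fin N → ℝ)
    (hint : ∀ n, Integrable (fun y => est y n) (gaussP N σ x₀))
    (hmean : ∀ n, ∫ y, est y n ∂gaussP N σ x₀ = x₀ n)
    (hmean' : ∀ i n, ∫ y, est y n ∂gaussP N σ (x₀ + v i) = x₀ n + v i n) :
    ENNReal.ofReal (A * V.transpose).trace ≤ MSE N σ est x₀ := by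
  have hcoe : ((σ ^ 2).toNNReal : ℝ) = σ ^ 2 := Real.coe_toNNReal _ (sq_nonneg σ)
  have hvar : (σ ^ 2).toNNReal ≠ 0 := (Real.toNNReal_pos.2 (by positivity)).ne'
  have hcoord (n : Fin N) :
      ENNReal.ofReal (∑ i, A n i * V n i) ≤ eVar[fun y => est y n; gaussP N σ x₀] := by
    refine hammersley_chapman_robbins_gaussian x₀ hvar (hint n).1 (w := v) (fun i => ?_)
      fun j => ?_
    · exact (congrArg₂ _ (hmean' i n) (hmean n)).trans (by rw [hV, add_sub_cancel_left])
    · simp only [hcoe, dotProduct, ← hJ]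
      rw [← Matrix.mul_apply, hA]
  calc ENNReal.ofReal (A * V.transpose).trace
      ≤ ∑ n, ENNReal.ofReal (∑ i, A n i * V n i) := ofReal_trace_mul_transpose_le A V
    _ ≤ ∑ n, eVar[fun y => est y n; gaussP N σ x₀] := Finset.sum_le_sum fun n _ => hcoord n
    _ = MSE N σ est x₀ := (MSE_eq_sum_evariance (fun n => (hint n).aemeasurable) hmean).symm

/-- The Hammersley–Chapman–Robbins bound: for test points `v_i` with `x₀ + v_i ∈ X_S`,
every measurable unbiased square-integrable estimator satisfies
`ε(x₀; x̂) ≥ Tr(V J⁻¹ Vᵀ)`. -/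
theorem stmt_13 (N S : ℕ) (σ : ℝ) (hσ : 0 < σ) (hS : 1 ≤ S) (hSN : S ≤ N)
    (x₀ : Fin N → ℝ) (hx₀ : x₀ ∈ sparseSet N S)
    (p : ℕ) (v : Fin p → Fin N → ℝ) (hv : ∀ i, x₀ + v i ∈ sparseSet N S)
    (V : Matrix (Fin N) (Fin p) ℝ) (hV : ∀ n i, V n i = v i n)
    (J : Matrix (Fin p) (Fin p) ℝ)
    (hJ : ∀ i j, J i j = Real.exp ((∑ n, v i n * v j n) / σ ^ 2) - 1)
    (hJunit : IsUnit J)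
    (est : (Fin N → ℝ) → Fin N → ℝ) (hmeas : Measurable est)
    (hunb : Unbiased N S σ est)
    (hsq : ∀ i, Integrable (fun y => (est y i) ^ 2) (gaussP N σ x₀)) :
    ENNReal.ofReal (Matrix.trace (V * J⁻¹ * V.transpose)) ≤ MSE N σ est x₀ := by
  exact stmt_13_general hσ.ne' x₀ v V hV J hJ (V * J⁻¹)
    (Matrix.nonsing_inv_mul_cancel_right _ _ ((Matrix.isUnit_iff_isUnit_det J).1 hJunit)) est
    (fun n => (hunb x₀ hx₀ n).1) (fun n => (hunb x₀ hx₀ n).2) fun i n => (hunb _ (hv i) n).2
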